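/- Let n ≥ 1 be an integer and A > 0 a real constant. For every ε > 0 there exists a constant C = C(n, A, ε) such that the following holds for all real H ≥ 2: for every integer Q_0 and all nonzero integers Q_1, …, Q_n with |Q_i| ≤ H^A for i = 1, …, n, the number of n-tuples (x_1, …, x_n) of nonzero integers with |x_i| ≤ H for all i satisfying Σ_{i=1}^n Q_i/x_i = Q_0 is at most C·H^{n/2+ε}. -/

import Mathlib

theorem divisor_bound (δ : ℝ) (hδ : 0 < δ) :
    ∃ c : ℝ, 1 ≤ c ∧ ∀ m : ℕ, m ≠ 0 → (m.divisors.card : ℝ) ≤ c * (m : ℝ) ^ δ := by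
  set t : ℝ := δ * Real.log 2 with ht
  have hl2 : 0 < Real.log 2 := Real.log_pos (by norm_num)
  have htpos : 0 < t := mul_pos hδ hl2
  set K : ℝ := 1 + 1 / t with hK
  have hK1 : 1 ≤ K := by rw [hK]; have : 0 < 1 / t := by positivity
                         linarith
  obtain ⟨N, hN⟩ := exists_nat_gt ((2 : ℝ) ^ (1 / δ))
  refine ⟨K ^ N, one_le_pow₀ hK1, fun m hm => ?_⟩
  have key : ∀ p ∈ m.primeFactors, ((m.factorization p + 1 : ℕ) : ℝ) ≤
      (if p < N then K else 1) * ((p : ℝ) ^ (m.factorization p)) ^ δ := by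
    intro p hp
    have hp2 : 2 ≤ p := (Nat.prime_of_mem_primeFactors hp).two_le
    have hp2' : (2 : ℝ) ≤ p := by exact_mod_cast hp2
    set v := m.factorization p
    have e1 : ((p : ℝ) ^ v) ^ δ = ((p : ℝ) ^ δ) ^ v := by
      rw [← Real.rpow_natCast, ← Real.rpow_natCast, ← Real.rpow_mul (by positivity),
        ← Real.rpow_mul (by positivity), mul_comm]
    rw [e1]
    push_cast
    split_ifs with h
    · have h2 : (2 : ℝ) ^ δ ≤ (p : ℝ) ^ δ := Real.rpow_le_rpow (by norm_num) hp2' hδ.le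
      have h3 : ((2 : ℝ) ^ δ) ^ v ≤ ((p : ℝ) ^ δ) ^ v := pow_le_pow_left₀ (by positivity) h2 v
      have h4 : 1 + t ≤ (2 : ℝ) ^ δ := by
        rw [Real.rpow_def_of_pos (by norm_num), mul_comm, ← ht]
        linarith [Real.add_one_le_exp t]
      have h5 : 1 + (v : ℝ) * t ≤ (1 + t) ^ v :=
        one_add_mul_le_pow (by linarith) v
      have h6 : (1 + t) ^ v ≤ ((2 : ℝ) ^ δ) ^ v := pow_le_pow_left₀ (by positivity) h4 v
      have h7 : (v : ℝ) + 1 ≤ K * (1 + v * t) := by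
        have : K * (1 + v * t) = 1 + v + (1 / t + v * t) := by
          rw [hK]; field_simp; ring
        have : 0 < 1 / t := by positivity
        have : 0 ≤ v * t := by positivity
        linarith
      exact h7.trans (mul_le_mul_of_nonneg_left (h5.trans (h6.trans h3)) (by linarith))
    · have h2 : (2 : ℝ) ≤ (p : ℝ) ^ δ := by
        have h3 : (2 : ℝ) ^ (1 / δ) ≤ p := hN.le.trans (by exact_mod_cast not_lt.mp h)
        have h4 := Real.rpow_le_rpow (by positivity) h3 hδ.le
        rwa [← Real.rpow_mul (by norm_num), one_div, inv_mul_cancel₀ hδ.ne', Real.rpow_one] at h4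
      have h3 : (2 : ℝ) ^ v ≤ ((p : ℝ) ^ δ) ^ v := pow_le_pow_left₀ (by positivity) h2 v
      have h4 : v + 1 ≤ 2 ^ v := Nat.lt_two_pow_self
      have h5 : (v : ℝ) + 1 ≤ 2 ^ v := by exact_mod_cast h4
      linarith
  rw [Nat.card_divisors hm]
  push_cast
  have h1 := Finset.prod_le_prod (fun p _ => by positivity) key
  push_cast at h1
  refine h1.trans ?_
  rw [Finset.prod_mul_distrib, Real.finsetProd_rpow _ _ (fun i _ => by positivity)]
  have h2 : ∏ p ∈ m.primeFactors, (p : ℝ) ^ (m.factorization p) = m := by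
    have := Nat.prod_factorization_pow_eq_self hm
    conv_rhs => rw [← this]
    rw [Finsupp.prod]
    push_cast
    rfl
  rw [h2]
  apply mul_le_mul_of_nonneg_right _ (by positivity)
  rw [Finset.prod_ite, Finset.prod_const_one, mul_one, Finset.prod_const]
  apply pow_le_pow_right₀ hK1
  calc _ ≤ (Finset.range N).card := Finset.card_le_card (by
        intro p hp
        simp only [Finset.mem_filter] at hp
        exact Finset.mem_range.mpr hp.2)
    _ = N := Finset.card_range N

theorem prime_pow_dvd_lcm {ι : Type*} [DecidableEq ι] (s : Finset ι) (a : ι → ℕ)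
    (p k : ℕ) (hp : p.Prime) (hk : k ≠ 0) (ha : ∀ i, a i ≠ 0) (h : p ^ k ∣ s.lcm a) :
    ∃ i ∈ s, p ^ k ∣ a i := by
  induction s using Finset.induction_on with
  | empty =>
    simp only [Finset.lcm_empty, Nat.dvd_one, Nat.pow_eq_one] at h
    have := hp.one_lt
    omega
  | insert i s hi ih =>
    rw [Finset.lcm_insert] at h
    have hs : s.lcm a ≠ 0 := by
      rw [Ne, Finset.lcm_eq_zero_iff]
      rintro ⟨j, _, hj⟩
      exact ha j hj
    change p ^ k ∣ Nat.lcm (a i) (s.lcm a) at h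
    have h' := (hp.pow_dvd_iff_le_factorization (Nat.lcm_ne_zero (ha i) hs)).mp h
    rw [Nat.factorization_lcm (ha i) hs, Finsupp.sup_apply, le_sup_iff] at h'
    rcases h' with h' | h'
    · exact ⟨i, Finset.mem_insert_self _ _, (hp.pow_dvd_iff_le_factorization (ha i)).mpr h'⟩
    · obtain ⟨j, hj, hj'⟩ := ih ((hp.pow_dvd_iff_le_factorization hs).mpr h')
      exact ⟨j, Finset.mem_insert_of_mem hj, hj'⟩

theorem lcm_sq_dvd {n : ℕ} (a : Fin n → ℕ) (ha : ∀ i, a i ≠ 0)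
    (h : ∀ i, a i ∣ (Finset.univ.erase i).lcm a) :
    (Finset.univ.lcm a) ^ 2 ∣ ∏ i, a i := by
  have hL : Finset.univ.lcm a ≠ 0 := by
    rw [Ne, Finset.lcm_eq_zero_iff]
    rintro ⟨j, _, hj⟩
    exact ha j hj
  have hP : ∏ i, a i ≠ 0 := Finset.prod_ne_zero_iff.mpr fun i _ => ha i
  rw [← Nat.factorization_le_iff_dvd (pow_ne_zero 2 hL) hP]
  intro p
  by_cases hp : p.Prime
  swap
  · simp [Nat.factorization_eq_zero_of_not_prime _ hp]
  rw [Nat.factorization_pow, Finsupp.smul_apply, smul_eq_mul]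
  set k := (Finset.univ.lcm a).factorization p with hk
  by_cases hk0 : k = 0
  · simp [hk0]
  obtain ⟨i, _, hi⟩ := prime_pow_dvd_lcm Finset.univ a p k hp hk0 ha (Nat.ordProj_dvd _ _)
  obtain ⟨j, hj, hj'⟩ := prime_pow_dvd_lcm _ a p k hp hk0 ha (hi.trans (h i))
  rw [← hp.pow_dvd_iff_le_factorization hP, two_mul, pow_add]
  refine (mul_dvd_mul hi hj').trans ?_
  rw [← Finset.mul_prod_erase _ _ (Finset.mem_univ i)]
  exact mul_dvd_mul_left _ (Finset.dvd_prod_of_mem _ hj)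

theorem dvd_lcm_erase {n : ℕ} (q z : Fin n → ℤ) (hz : ∀ i, z i ≠ 0)
    (hc : ∀ i, IsCoprime (z i) (q i)) (Q₀ : ℤ)
    (h : ∑ i, (q i : ℚ) / (z i : ℚ) = Q₀) (i : Fin n) :
    (z i).natAbs ∣ (Finset.univ.erase i).lcm (fun j => (z j).natAbs) := by
  set M := (Finset.univ.erase i).lcm (fun j => (z j).natAbs) with hM
  have hd : ∀ j ∈ Finset.univ.erase i, ∃ w : ℤ, (M : ℤ) = z j * w := by
    intro j hj
    have : (z j).natAbs ∣ M := Finset.dvd_lcm (f := fun j => (z j).natAbs) hj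
    exact Int.natAbs_dvd.mp (Int.natCast_dvd_natCast.mpr this)
  choose! w hw using hd
  have hzi : (z i : ℚ) ≠ 0 := by exact_mod_cast hz i
  have e : (M : ℚ) * q i = z i * (M * Q₀ - ∑ j ∈ Finset.univ.erase i, (q j : ℚ) * w j) := by
    have e1 : ∑ j ∈ Finset.univ.erase i, (q j : ℚ) * w j
        = M * ∑ j ∈ Finset.univ.erase i, (q j : ℚ) / z j := by
      rw [Finset.mul_sum]
      refine Finset.sum_congr rfl fun j hj => ?_
      have hzj : (z j : ℚ) ≠ 0 := by exact_mod_cast hz j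
      have : (M : ℚ) = z j * w j := by exact_mod_cast hw j hj
      rw [this]; field_simp
    rw [← Finset.add_sum_erase _ _ (Finset.mem_univ i)] at h
    rw [e1, ← h]
    field_simp
    ring
  have e' : (M : ℤ) * q i = z i * (M * Q₀ - ∑ j ∈ Finset.univ.erase i, q j * w j) := by
    exact_mod_cast e
  have : z i ∣ (M : ℤ) := (hc i).dvd_of_dvd_mul_right ⟨_, e'⟩
  exact Int.natCast_dvd_natCast.mp (Int.natAbs_dvd.mpr this)

theorem stmt17 (n : ℕ) (hn : 1 ≤ n) (A : ℝ) (hA : A > 0) :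
    ∀ ε > (0 : ℝ), ∃ C : ℝ, ∀ H : ℝ, H ≥ 2 →
      ∀ Q₀ : ℤ, ∀ Q : Fin n → ℤ,
      (∀ i, Q i ≠ 0) → (∀ i, (|Q i| : ℝ) ≤ H ^ A) →
      (Set.ncard {x : Fin n → ℤ |
          (∀ i, x i ≠ 0 ∧ (|x i| : ℝ) ≤ H) ∧
          ∑ i, (Q i : ℚ) / (x i : ℚ) = (Q₀ : ℚ)} : ℝ) ≤
        C * H ^ ((n : ℝ) / 2 + ε) := by
  intro ε hε
  have hn0 : (0 : ℝ) < n := by exact_mod_cast hn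
  set δ : ℝ := ε / ((A + n / 2) * n) with hδ
  have hδpos : 0 < δ := by positivity
  obtain ⟨c, hc1, hc⟩ := divisor_bound δ hδpos
  refine ⟨(2 * c ^ 2) ^ n, fun H hH Q₀ Q hQ0 hQ => ?_⟩
  have hH0 : 0 < H := by linarith
  set N : ℕ := ⌊H ^ ((n : ℝ) / 2)⌋₊ with hN
  let F : ℕ → Fin n → Finset ℤ := fun L i =>
    (((Q i).natAbs.divisors ×ˢ L.divisors) ×ˢ ({1, -1} : Finset ℤ)).image
      (fun t => (t.1.1 : ℤ) * t.1.2 * t.2)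
  let T : Finset (Fin n → ℤ) := (Finset.Icc 1 N).biUnion fun L => Fintype.piFinset (F L)
  have hsub : {x : Fin n → ℤ |
          (∀ i, x i ≠ 0 ∧ (|x i| : ℝ) ≤ H) ∧
          ∑ i, (Q i : ℚ) / (x i : ℚ) = (Q₀ : ℚ)} ⊆ (T : Set (Fin n → ℤ)) := by
    rintro x ⟨hx, hsum⟩
    have hd : ∀ i, ∃ d : ℕ, ∃ z q : ℤ, d ≠ 0 ∧ x i = d * z ∧ Q i = d * q ∧ IsCoprime z q := by
      intro i
      have hg : 0 < Int.gcd (x i) (Q i) := Int.gcd_pos_of_ne_zero_left _ (hx i).1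
      obtain ⟨z, q, hzq, h1, h2⟩ := Int.exists_gcd_one hg
      exact ⟨_, z, q, hg.ne', by rw [mul_comm]; exact h1, by rw [mul_comm]; exact h2,
        Int.isCoprime_iff_gcd_eq_one.mpr hzq⟩
    choose d z q hd0 hxz hQq hcop using hd
    have hz0 : ∀ i, z i ≠ 0 := by
      intro i h0
      apply (hx i).1
      rw [hxz i, h0, mul_zero]
    have hsum' : ∑ i, (q i : ℚ) / (z i : ℚ) = Q₀ := by
      rw [← hsum]
      refine Finset.sum_congr rfl fun i _ => ?_
      have h1 : (d i : ℚ) ≠ 0 := by exact_mod_cast hd0 i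
      rw [hxz i, hQq i]
      push_cast
      rw [mul_div_mul_left _ _ h1]
    have hdv := dvd_lcm_erase q z hz0 hcop Q₀ hsum'
    have ha0 : ∀ i, (z i).natAbs ≠ 0 := fun i => Int.natAbs_ne_zero.mpr (hz0 i)
    have hsq := lcm_sq_dvd (fun i => (z i).natAbs) ha0 hdv
    set L := Finset.univ.lcm (fun i => (z i).natAbs) with hLdef
    have hL : L ≠ 0 := by
      rw [hLdef, Ne, Finset.lcm_eq_zero_iff]
      rintro ⟨j, _, hj⟩
      exact ha0 j hj
    have hzH : ∀ i, ((z i).natAbs : ℝ) ≤ H := by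
      intro i
      refine le_trans ?_ (hx i).2
      have h1 : (z i).natAbs ≤ (x i).natAbs := by
        rw [hxz i, Int.natAbs_mul, Int.natAbs_natCast]
        exact Nat.le_mul_of_pos_left _ (Nat.pos_of_ne_zero (hd0 i))
      rw [← Int.cast_abs, ← Nat.cast_natAbs]
      exact_mod_cast h1
    have hL2 : (L : ℝ) ^ 2 ≤ H ^ n := by
      have h1 : L ^ 2 ≤ ∏ i, (z i).natAbs :=
        Nat.le_of_dvd (Nat.pos_of_ne_zero (Finset.prod_ne_zero_iff.mpr fun i _ => ha0 i)) hsq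
      have h2 : (L : ℝ) ^ 2 ≤ ∏ i, ((z i).natAbs : ℝ) := by exact_mod_cast h1
      refine h2.trans ?_
      calc _ ≤ ∏ _i : Fin n, H := Finset.prod_le_prod (fun i _ => by positivity) fun i _ => hzH i
        _ = H ^ n := by simp
    have hLN : L ≤ N := by
      apply Nat.le_floor
      apply le_of_sq_le_sq _ (by positivity)
      rw [← Real.rpow_natCast (H ^ ((n : ℝ) / 2)), ← Real.rpow_mul hH0.le]
      push_cast
      rw [div_mul_cancel₀ _ (by norm_num), Real.rpow_natCast]
      exact hL2
    simp only [T, Finset.coe_biUnion, Set.mem_iUnion, Finset.mem_coe]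
    refine ⟨L, Finset.mem_Icc.mpr ⟨Nat.pos_of_ne_zero hL, hLN⟩, ?_⟩
    rw [Fintype.mem_piFinset]
    intro i
    simp only [F, Finset.mem_image]
    refine ⟨((d i, (z i).natAbs), (z i).sign), ?_, ?_⟩
    · simp only [Finset.mem_product, Nat.mem_divisors]
      refine ⟨⟨⟨?_, Int.natAbs_ne_zero.mpr (hQ0 i)⟩, ?_, hL⟩, ?_⟩
      · rw [hQq i, Int.natAbs_mul, Int.natAbs_natCast]
        exact dvd_mul_right _ _
      · exact Finset.dvd_lcm (f := fun j => (z j).natAbs) (Finset.mem_univ i)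
      · rcases lt_or_gt_of_ne (hz0 i) with h | h
        · simp [Int.sign_eq_neg_one_of_neg h]
        · simp [Int.sign_eq_one_of_pos h]
    · simp only
      rw [mul_assoc, mul_comm ((z i).natAbs : ℤ), Int.sign_mul_natAbs, hxz i]
  have hcard1 : (Set.ncard {x : Fin n → ℤ |
          (∀ i, x i ≠ 0 ∧ (|x i| : ℝ) ≤ H) ∧
          ∑ i, (Q i : ℚ) / (x i : ℚ) = (Q₀ : ℚ)} : ℝ) ≤ T.card := by
    have := Set.ncard_le_ncard hsub T.finite_toSet
    rw [Set.ncard_coe_finset] at this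
    exact_mod_cast this
  refine hcard1.trans ?_
  have hNle : (N : ℝ) ≤ H ^ ((n : ℝ) / 2) := Nat.floor_le (by positivity)
  have hF : ∀ L ∈ Finset.Icc 1 N, ∀ i, ((F L i).card : ℝ) ≤
      2 * c ^ 2 * H ^ ((A + n / 2) * δ) := by
    intro L hL i
    obtain ⟨hL1, hL2⟩ := Finset.mem_Icc.mp hL
    have h1 : (F L i).card ≤ (Q i).natAbs.divisors.card * L.divisors.card * 2 := by
      refine Finset.card_image_le.trans ?_
      rw [Finset.card_product, Finset.card_product]
      exact Nat.mul_le_mul_left _ Finset.card_le_two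
    have h1' : ((F L i).card : ℝ) ≤ (Q i).natAbs.divisors.card * L.divisors.card * 2 := by
      exact_mod_cast h1
    have h2 : ((Q i).natAbs.divisors.card : ℝ) ≤ c * H ^ (A * δ) := by
      refine (hc _ (Int.natAbs_ne_zero.mpr (hQ0 i))).trans ?_
      rw [Real.rpow_mul hH0.le]
      apply mul_le_mul_of_nonneg_left _ (by linarith)
      apply Real.rpow_le_rpow (by positivity) _ hδpos.le
      rw [Nat.cast_natAbs, Int.cast_abs]
      exact hQ i
    have h3 : (L.divisors.card : ℝ) ≤ c * H ^ ((n : ℝ) / 2 * δ) := by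
      refine (hc _ (by omega)).trans ?_
      rw [Real.rpow_mul hH0.le]
      apply mul_le_mul_of_nonneg_left _ (by linarith)
      apply Real.rpow_le_rpow (by positivity) _ hδpos.le
      exact le_trans (by exact_mod_cast hL2) hNle
    calc _ ≤ _ := h1'
      _ ≤ (c * H ^ (A * δ)) * (c * H ^ ((n : ℝ) / 2 * δ)) * 2 := by
          gcongr
      _ = _ := by rw [add_mul, Real.rpow_add hH0]; ring
  have hT : T.card ≤ ∑ L ∈ Finset.Icc 1 N, ∏ i, (F L i).card := by
    refine Finset.card_biUnion_le.trans (le_of_eq ?_)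
    simp only [Fintype.card_piFinset]
  have hT' : (T.card : ℝ) ≤ ∑ L ∈ Finset.Icc 1 N, ∏ i, ((F L i).card : ℝ) := by
    exact_mod_cast hT
  calc (T.card : ℝ) ≤ _ := hT'
    _ ≤ ∑ L ∈ Finset.Icc 1 N, ∏ _i : Fin n, (2 * c ^ 2 * H ^ ((A + n / 2) * δ)) :=
        Finset.sum_le_sum fun L hL => Finset.prod_le_prod (fun i _ => by positivity)
          fun i _ => hF L hL i
    _ = N * ((2 * c ^ 2) ^ n * H ^ ε) := by
        have hexp : (H ^ ((A + n / 2) * δ)) ^ n = H ^ ε := by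
          rw [← Real.rpow_natCast, ← Real.rpow_mul hH0.le]
          congr 1
          rw [hδ]
          have : A + n / 2 ≠ 0 := by positivity
          field_simp
        rw [Finset.sum_const, Finset.prod_const, mul_pow]
        simp [hexp]
    _ ≤ H ^ ((n : ℝ) / 2) * ((2 * c ^ 2) ^ n * H ^ ε) := by
        apply mul_le_mul_of_nonneg_right hNle (by positivity)
    _ = _ := by rw [Real.rpow_add hH0]; ring
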